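/- The Cayley conjugate C M^E C* of the transfer operator is J-unitary and equals the block operator (1/2)[[(E−V)T⁻¹ − i(T* + T⁻¹), (E−V)T⁻¹ + i(T* − T⁻¹)],[(E−V)T⁻¹ − i(T* − T⁻¹), (E−V)T⁻¹ + i(T* + T⁻¹)]]. -/

import Mathlib

open ContinuousLinearMap

noncomputable section

variable {H : Type*} [NormedAddCommGroup H] [InnerProductSpace ℂ H] [CompleteSpace H]

/-- The Hilbert space `K = H ⊕ H` (with the `ℓ²` product norm). -/
abbrev Kspace (H : Type*) [NormedAddCommGroup H] [InnerProductSpace ℂ H] : Type _ :=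
  WithLp 2 (H × H)

/-- The block operator `[[A,B],[C,D]]` on `K`, acting by `(x,y) ↦ (Ax + By, Cx + Dy)`. -/
def blockOp (A B C D : H →L[ℂ] H) : Kspace H →L[ℂ] Kspace H :=
  (((WithLp.prodContinuousLinearEquiv 2 ℂ H H).symm : (H × H) →L[ℂ] Kspace H)) ∘L
    (((A ∘L ContinuousLinearMap.fst ℂ H H) + (B ∘L ContinuousLinearMap.snd ℂ H H)).prod
      ((C ∘L ContinuousLinearMap.fst ℂ H H) + (D ∘L ContinuousLinearMap.snd ℂ H H))) ∘L
    (((WithLp.prodContinuousLinearEquiv 2 ℂ H H) : Kspace H →L[ℂ] H × H))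

/-- The fundamental symmetry `J = [[1,0],[0,-1]]`. -/
def Jop (H : Type*) [NormedAddCommGroup H] [InnerProductSpace ℂ H] [CompleteSpace H] :
    Kspace H →L[ℂ] Kspace H :=
  blockOp 1 0 0 (-1)

/-- The Cayley transform `C = (1/√2)[[1, -i],[1, i]]`. -/
def Cayley (H : Type*) [NormedAddCommGroup H] [InnerProductSpace ℂ H] [CompleteSpace H] :
    Kspace H →L[ℂ] Kspace H :=
  blockOp (((Real.sqrt 2 : ℂ)⁻¹) • 1) ((-((Real.sqrt 2 : ℂ)⁻¹ * Complex.I)) • 1)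
    (((Real.sqrt 2 : ℂ)⁻¹) • 1) ((((Real.sqrt 2 : ℂ)⁻¹ * Complex.I)) • 1)

/-- The transfer operator `M^E = [[(E − V)T⁻¹, −T*],[T⁻¹, 0]]`, where the inverse `T⁻¹`
is given as the operator `Tinv`. -/
def transferOp (E : ℝ) (V T Tinv : H →L[ℂ] H) : Kspace H →L[ℂ] Kspace H :=
  blockOp ((((E : ℂ) • (1 : H →L[ℂ] H)) - V) ∘L Tinv) (-(adjoint T)) Tinv 0

theorem blockOp_apply (A B C D : H →L[ℂ] H) (x : Kspace H) :
    blockOp A B C D x = WithLp.toLp 2 (A x.fst + B x.snd, C x.fst + D x.snd) := rfl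

theorem blockOp_comp (A B C D A' B' C' D' : H →L[ℂ] H) :
    blockOp A B C D ∘L blockOp A' B' C' D' =
      blockOp (A * A' + B * C') (A * B' + B * D') (C * A' + D * C') (C * B' + D * D') := by
  ext x
  simp only [ContinuousLinearMap.comp_apply, blockOp_apply]
  refine congrArg (WithLp.toLp 2) (Prod.ext ?_ ?_) <;>
  · simp
    abel

theorem blockOp_one : blockOp (1 : H →L[ℂ] H) 0 0 1 = 1 := by
  ext x
  simp only [blockOp_apply, one_apply, zero_apply, add_zero, zero_add]
  rfl

theorem blockOp_adjoint (A B C D : H →L[ℂ] H) :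
    adjoint (blockOp A B C D) = blockOp (adjoint A) (adjoint C) (adjoint B) (adjoint D) := by
  symm
  rw [ContinuousLinearMap.eq_adjoint_iff]
  intro x y
  simp only [blockOp_apply, WithLp.prod_inner_apply, inner_add_left, inner_add_right,
    adjoint_inner_left, WithLp.fst, WithLp.snd]
  ring

theorem sqrt_two_inv_mul : (Real.sqrt 2 : ℂ)⁻¹ * (Real.sqrt 2 : ℂ)⁻¹ = (2 : ℂ)⁻¹ := by
  rw [← mul_inv, ← Complex.ofReal_mul, Real.mul_self_sqrt (by norm_num)]
  norm_num

theorem Cayley_adjoint : adjoint (Cayley H) =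
    blockOp (((Real.sqrt 2 : ℂ)⁻¹) • 1) (((Real.sqrt 2 : ℂ)⁻¹) • 1)
      (((Real.sqrt 2 : ℂ)⁻¹ * Complex.I) • 1) ((-((Real.sqrt 2 : ℂ)⁻¹ * Complex.I)) • 1) := by
  have h1 : adjoint (1 : H →L[ℂ] H) = 1 := by
    rw [← ContinuousLinearMap.star_eq_adjoint, star_one]
  rw [Cayley, blockOp_adjoint]
  simp [h1, Complex.conj_ofReal, map_smulₛₗ]

theorem Cayley_adjoint_comp : adjoint (Cayley H) ∘L Cayley H = 1 := by
  rw [Cayley_adjoint, Cayley, blockOp_comp, ← blockOp_one]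
  congr 1 <;> simp only [smul_mul_smul_comm, mul_one, ← add_smul]
  · rw [sqrt_two_inv_mul, ← two_mul, mul_inv_cancel₀ two_ne_zero, one_smul]
  · ring_nf; simp
  · ring_nf; simp
  · have : (Real.sqrt 2 : ℂ)⁻¹ * Complex.I * -((Real.sqrt 2 : ℂ)⁻¹ * Complex.I) +
      -((Real.sqrt 2 : ℂ)⁻¹ * Complex.I) * ((Real.sqrt 2 : ℂ)⁻¹ * Complex.I) = 1 := by
      linear_combination (-2 * Complex.I ^ 2) * sqrt_two_inv_mul - Complex.I_sq
    rw [this, one_smul]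

theorem Cayley_comp_adjoint : Cayley H ∘L adjoint (Cayley H) = 1 := by
  rw [Cayley_adjoint, Cayley, blockOp_comp, ← blockOp_one]
  have h := sqrt_two_inv_mul
  have hI := Complex.I_sq
  congr 1 <;> simp only [smul_mul_smul_comm, mul_one, ← add_smul]
  · convert one_smul ℂ _ using 2
    linear_combination (1 - Complex.I ^ 2) * h - (1/2) * hI
  · convert zero_smul ℂ _ using 2
    linear_combination (1 + Complex.I ^ 2) * h + (1/2) * hI
  · convert zero_smul ℂ _ using 2
    linear_combination (1 + Complex.I ^ 2) * h + (1/2) * hI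
  · convert one_smul ℂ _ using 2
    linear_combination (1 - Complex.I ^ 2) * h - (1/2) * hI

theorem Cayley_J : adjoint (Cayley H) ∘L Jop H ∘L Cayley H =
    blockOp 0 ((-Complex.I) • 1) (Complex.I • 1) 0 := by
  rw [Cayley_adjoint, Cayley, Jop, blockOp_comp, blockOp_comp]
  have h := sqrt_two_inv_mul
  congr 1 <;> simp only [mul_one, one_mul, zero_mul, mul_zero, add_zero, zero_add, neg_mul, mul_neg,
    smul_mul_smul_comm, ← add_smul, ← neg_smul]
  · convert zero_smul ℂ _ using 2
    ring
  · congr 1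
    linear_combination (-2 * Complex.I) * h
  · congr 1
    linear_combination (2 * Complex.I) * h
  · convert zero_smul ℂ _ using 2
    ring

theorem transferOp_I (E : ℝ) (V T Tinv : H →L[ℂ] H)
    (hV : IsSelfAdjoint V) (hT : T * Tinv = 1) :
    adjoint (transferOp E V T Tinv) ∘L blockOp 0 ((-Complex.I) • 1) (Complex.I • 1) 0 ∘L
      transferOp E V T Tinv = blockOp 0 ((-Complex.I) • 1) (Complex.I • 1) 0 := by
  have hS : star Tinv * star T = 1 := by rw [← star_mul, hT, star_one]
  rw [transferOp, blockOp_adjoint, blockOp_comp, blockOp_comp]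
  simp only [← ContinuousLinearMap.star_eq_adjoint, ← ContinuousLinearMap.mul_def, star_mul,
    star_sub, hV.star_eq, star_smul, star_one, star_neg, star_star, star_zero]
  congr 1
  · simp [mul_sub, sub_mul, mul_assoc, smul_sub, smul_comm E Complex.I]
  · simp [hS]
  · simp [hT]
  · simp

theorem transferOp_isUnit (E : ℝ) (V T Tinv : H →L[ℂ] H)
    (hT : T * Tinv = 1) (hT' : Tinv * T = 1) : IsUnit (transferOp E V T Tinv) := by
  have hS : star Tinv * star T = 1 := by rw [← star_mul, hT, star_one]
  have hS' : star T * star Tinv = 1 := by rw [← star_mul, hT', star_one]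
  refine isUnit_iff_exists.2 ⟨blockOp 0 T (-star Tinv)
    (star Tinv * ((E : ℂ) • (1 : H →L[ℂ] H) - V)), ?_, ?_⟩
  · rw [ContinuousLinearMap.mul_def, transferOp, blockOp_comp, ← blockOp_one]
    simp only [← ContinuousLinearMap.star_eq_adjoint, ← ContinuousLinearMap.mul_def]
    congr 1
    · simp [hS']
    · rw [mul_assoc, hT', neg_mul, ← mul_assoc, hS']; simp
    · simp
    · simp [hT']
  · rw [ContinuousLinearMap.mul_def, transferOp, blockOp_comp, ← blockOp_one]
    simp only [← ContinuousLinearMap.star_eq_adjoint, ← ContinuousLinearMap.mul_def]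
    congr 1
    · simp [hT]
    · simp
    · simp [mul_assoc]
    · simp [hS]

/-- The Cayley conjugate `C M^E C*` of the transfer operator is `J`-unitary and equals the
explicit block operator of equation (8) of the paper. -/
theorem cayley_conj_transferOp (E : ℝ) (V T Tinv : H →L[ℂ] H)
    (hV : IsSelfAdjoint V) (hT : T ∘L Tinv = 1) (hT' : Tinv ∘L T = 1) :
    (IsUnit (Cayley H ∘L transferOp E V T Tinv ∘L adjoint (Cayley H)) ∧
      adjoint (Cayley H ∘L transferOp E V T Tinv ∘L adjoint (Cayley H)) ∘L Jop H ∘L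
        (Cayley H ∘L transferOp E V T Tinv ∘L adjoint (Cayley H)) = Jop H) ∧
    Cayley H ∘L transferOp E V T Tinv ∘L adjoint (Cayley H) =
      blockOp
        ((2 : ℂ)⁻¹ • (((((E : ℂ) • (1 : H →L[ℂ] H)) - V) ∘L Tinv) -
            Complex.I • (adjoint T + Tinv)))
        ((2 : ℂ)⁻¹ • (((((E : ℂ) • (1 : H →L[ℂ] H)) - V) ∘L Tinv) +
            Complex.I • (adjoint T - Tinv)))
        ((2 : ℂ)⁻¹ • (((((E : ℂ) • (1 : H →L[ℂ] H)) - V) ∘L Tinv) -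
            Complex.I • (adjoint T - Tinv)))
        ((2 : ℂ)⁻¹ • (((((E : ℂ) • (1 : H →L[ℂ] H)) - V) ∘L Tinv) +
            Complex.I • (adjoint T + Tinv))) := by
  have hT1 : T * Tinv = 1 := hT
  have hT2 : Tinv * T = 1 := hT'
  have hc1 : adjoint (Cayley H) * Cayley H = 1 := Cayley_adjoint_comp
  have hc2 : Cayley H * adjoint (Cayley H) = 1 := Cayley_comp_adjoint
  refine ⟨⟨?_, ?_⟩, ?_⟩
  · have u1 : IsUnit (Cayley H) := isUnit_iff_exists.2 ⟨_, hc2, hc1⟩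
    have u2 : IsUnit (adjoint (Cayley H)) := isUnit_iff_exists.2 ⟨_, hc1, hc2⟩
    exact u1.mul ((transferOp_isUnit E V T Tinv hT1 hT2).mul u2)
  · have hJ := Cayley_J (H := H)
    have hM := transferOp_I E V T Tinv hV hT1
    rw [← hJ] at hM
    simp only [← ContinuousLinearMap.star_eq_adjoint, ← ContinuousLinearMap.mul_def] at hM hc1 hc2 ⊢
    simp only [star_mul, star_star]
    generalize Cayley H = c at *
    generalize transferOp E V T Tinv = m at *
    calc _ = c * (star m * ((star c * (Jop H * c)) * m)) * star c := by simp only [mul_assoc]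
      _ = (c * star c) * Jop H * (c * star c) := by rw [hM]; simp only [mul_assoc]
      _ = Jop H := by rw [hc2, one_mul, mul_one]
  · rw [Cayley_adjoint, Cayley, transferOp, blockOp_comp, blockOp_comp]
    generalize ((E : ℂ) • (1 : H →L[ℂ] H) - V) ∘L Tinv = A
    have h := sqrt_two_inv_mul
    have hI := Complex.I_mul_I
    generalize (Real.sqrt 2 : ℂ)⁻¹ = r at *
    congr 1 <;>
    · simp only [smul_mul_assoc, mul_smul_comm, one_mul, mul_one, zero_mul, smul_zero, add_zero,
        neg_mul, ← h]
      match_scalars <;> first | ring | linear_combination (r * r) * hI | linear_combination (-(r * r)) * hI
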